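/- arXiv:2401.09586 — 5 statements merged into one kernel-verified Lean document; each statement's English description precedes it below -/
import Mathlib

section
/- For every real p ≥ 2 there exists a constant C > 0, depending only on p, such that g_p(s + t) ≤ C (g_p(s) + t^2) for every s ≥ 0 and every t ∈ [0, 1]. -/
/-- For `p > 1`, `g_p(t) = t^2/2` if `0 ≤ t ≤ 1` and `g_p(t) = t^p/p + 1/2 - 1/p` if `t > 1`. -/
noncomputable def gp (p t : ℝ) : ℝ := if t ≤ 1 then t ^ 2 / 2 else t ^ p / p + 1 / 2 - 1 / p

/-!
Both branches of `g_p` grow at most like the power `q`, for any `q ≥ max 2 p`, so scaling the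
argument by `c ≥ 1` multiplies the value by at most `c ^ q`. If `x` is the larger of `s` and `t`,
then `s + t = c * x` with `1 ≤ c ≤ 2`, hence `g_p (s + t) ≤ 2 ^ q * (g_p s + g_p t)`; finally
`g_p t = t ^ 2 / 2` on `[0, 1]`.
-/

theorem rpow_sub_one_div_nonneg {p x : ℝ} (hp : p ≠ 0) (hx : 1 ≤ x) : 0 ≤ (x ^ p - 1) / p := by
  rcases hp.lt_or_gt with hneg | hpos
  · exact div_nonneg_of_nonpos
      (sub_nonpos.2 (Real.rpow_le_one_of_one_le_of_nonpos hx hneg.le)) hneg.le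
  · exact div_nonneg (sub_nonneg.2 (Real.one_le_rpow hx hpos.le)) hpos.le

-- Both sides are secant slopes at `0` of the convex function `r ↦ x ^ r`.
theorem rpow_sub_one_div_le_rpow_sub_one_div {p q x : ℝ} (hx : 0 < x) (hp : p ≠ 0) (hq : q ≠ 0)
    (hpq : p ≤ q) : (x ^ p - 1) / p ≤ (x ^ q - 1) / q := by
  simpa only [Real.rpow_zero, sub_zero] using
    (convexOn_rpow_left hx).secant_mono (Set.mem_univ 0) (Set.mem_univ p) (Set.mem_univ q)
      hp hq hpq

section gp

variable {p q c x : ℝ}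

theorem gp_of_le_one (hx : x ≤ 1) : gp p x = x ^ 2 / 2 :=
  if_pos hx

theorem gp_of_one_le (hx : 1 ≤ x) : gp p x = 1 / 2 + (x ^ p - 1) / p := by
  rcases hx.eq_or_lt with rfl | hx
  · simp [gp]
  · rw [gp, if_neg hx.not_ge]
    ring

theorem half_le_gp (hp : p ≠ 0) (hx : 1 ≤ x) : 1 / 2 ≤ gp p x := by
  rw [gp_of_one_le hx]
  exact le_add_of_nonneg_right (rpow_sub_one_div_nonneg hp hx)

theorem gp_nonneg (hp : p ≠ 0) : 0 ≤ gp p x := by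
  rcases le_total x 1 with hx | hx
  · rw [gp_of_le_one hx]
    positivity
  · exact one_half_pos.le.trans (half_le_gp hp hx)

theorem gp_le_rpow_div_two (hp : p ≠ 0) (hpq : p ≤ q) (hq : 2 ≤ q) (hx : 1 ≤ x) :
    gp p x ≤ x ^ q / 2 := by
  have hxq : 1 ≤ x ^ q := Real.one_le_rpow hx (by linarith)
  calc gp p x = 1 / 2 + (x ^ p - 1) / p := gp_of_one_le hx
    _ ≤ 1 / 2 + (x ^ q - 1) / q := by
      gcongr 1 / 2 + ?_
      exact rpow_sub_one_div_le_rpow_sub_one_div (by linarith) hp (by linarith) hpq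
    _ ≤ 1 / 2 + (x ^ q - 1) / 2 := by
      gcongr 1 / 2 + ?_
      exact div_le_div_of_nonneg_left (sub_nonneg.2 hxq) two_pos hq
    _ = x ^ q / 2 := by ring

theorem gp_mul_of_one_le (hc : 1 ≤ c) (hx : 1 ≤ x) :
    gp p (c * x) = gp p c + c ^ p * (gp p x - 1 / 2) := by
  rw [gp_of_one_le (one_le_mul_of_one_le_of_one_le hc hx), gp_of_one_le hc, gp_of_one_le hx,
    Real.mul_rpow (by linarith) (by linarith)]
  ring

theorem gp_mul_le (hp : p ≠ 0) (hpq : p ≤ q) (hq : 2 ≤ q) (hc : 1 ≤ c) (hx : 0 ≤ x) :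
    gp p (c * x) ≤ c ^ q * gp p x := by
  have hc0 : 0 ≤ c := by linarith
  rcases le_total x 1 with hx1 | hx1
  · rw [gp_of_le_one hx1]
    rcases le_total (c * x) 1 with hcx | hcx
    · have hcq : c ^ 2 ≤ c ^ q := by
        simpa only [Real.rpow_two] using Real.rpow_le_rpow_of_exponent_le hc hq
      calc gp p (c * x) = c ^ 2 * (x ^ 2 / 2) := by rw [gp_of_le_one hcx]; ring
        _ ≤ c ^ q * (x ^ 2 / 2) := by gcongr
    · have hxq : x ^ q ≤ x ^ 2 := by
        simpa only [Real.rpow_two] using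
          Real.rpow_le_rpow_of_exponent_ge' hx hx1 zero_le_two hq
      calc gp p (c * x) ≤ (c * x) ^ q / 2 := gp_le_rpow_div_two hp hpq hq hcx
        _ = c ^ q * (x ^ q / 2) := by rw [Real.mul_rpow hc0 hx, mul_div_assoc]
        _ ≤ c ^ q * (x ^ 2 / 2) := by gcongr
  · calc gp p (c * x) = gp p c + c ^ p * (gp p x - 1 / 2) := gp_mul_of_one_le hc hx1
      _ ≤ c ^ q / 2 + c ^ q * (gp p x - 1 / 2) := by
        have hgp : 0 ≤ gp p x - 1 / 2 := sub_nonneg.2 (half_le_gp hp hx1)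
        gcongr
        exact gp_le_rpow_div_two hp hpq hq hc
      _ = c ^ q * gp p x := by ring

end gp

theorem stmt2_general {p q s t : ℝ} (hp : p ≠ 0) (hpq : p ≤ q) (hq : 2 ≤ q) (hs : 0 ≤ s)
    (ht : 0 ≤ t) : gp p (s + t) ≤ 2 ^ q * (gp p s + gp p t) := by
  wlog hts : t ≤ s generalizing s t
  · simpa only [add_comm] using this ht hs (le_of_not_ge hts)
  obtain ⟨c, hc1, hc2, hcs⟩ : ∃ c, 1 ≤ c ∧ c ≤ 2 ∧ s + t = c * s := by
    rcases hs.eq_or_lt with rfl | hs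
    · exact ⟨1, le_rfl, one_le_two, by linarith⟩
    · refine ⟨1 + t / s, le_add_of_nonneg_right (by positivity), ?_, by field_simp⟩
      linarith [div_le_one_of_le₀ hts hs.le]
  have hgs : 0 ≤ gp p s := gp_nonneg hp
  calc gp p (s + t) = gp p (c * s) := by rw [hcs]
    _ ≤ c ^ q * gp p s := gp_mul_le hp hpq hq hc1 hs
    _ ≤ 2 ^ q * (gp p s + gp p t) := by
      gcongr
      exact le_add_of_nonneg_right (gp_nonneg hp)

/-- For every real `p ≥ 2` there exists a constant `C > 0`, depending only on `p`, such that
`g_p(s + t) ≤ C (g_p(s) + t^2)` for every `s ≥ 0` and every `t ∈ [0, 1]`. -/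
theorem stmt2 (p : ℝ) (hp : 2 ≤ p) :
    ∃ C : ℝ, 0 < C ∧ ∀ s : ℝ, 0 ≤ s → ∀ t : ℝ, t ∈ Set.Icc (0 : ℝ) 1 →
      gp p (s + t) ≤ C * (gp p s + t ^ 2) := by
  refine ⟨2 ^ p, by positivity, fun s hs t ht ↦ ?_⟩
  have hgt : gp p t ≤ t ^ 2 := by rw [gp_of_le_one ht.2]; exact half_le_self (sq_nonneg t)
  exact (stmt2_general (by linarith) le_rfl hp hs ht.1).trans (by gcongr)
end

section
/- Let d ≥ 2 and let Φ : ℝ^{d×d} → ℝ be twice continuously differentiable on a neighborhood of the identity matrix I, nonnegative, with Φ(R) = 0 for all R ∈ SO(d), and frame-indifferent, i.e. Φ(QF) = Φ(F) for all Q ∈ SO(d) and all F in the domain where both sides are defined. Then the second derivative of Φ at I, viewed as a quadratic form, satisfies D²Φ(I)[F, F] = D²Φ(I)[F_sym, F_sym] for every F ∈ ℝ^{d×d}, where F_sym = (F + Fᵀ)/2; in particular D²Φ(I)[F, F] = 0 whenever F is antisymmetric (Fᵀ = −F). -/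
open Matrix

attribute [local instance] Matrix.frobeniusNormedAddCommGroup Matrix.frobeniusNormedSpace

/-- `SO(d)`: real `d×d` matrices `Q` with `QᵀQ = I` and `det Q = 1`. -/
def SOd (d : ℕ) : Set (Matrix (Fin d) (Fin d) ℝ) :=
  {Q | Qᵀ * Q = 1 ∧ Q.det = 1}

/-!
Since `Φ ≥ 0` vanishes on `SO(d)`, every rotation is a minimiser, so `DΦ` vanishes identically on
`SO(d)`. Differentiating this along the tangent directions of `SO(d)` at `I`, which contain the
antisymmetric `W` because `t ↦ exp (tW)` stays in `SO(d)`, gives `D²Φ(I)[W, ·] = 0`. By symmetry of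
`D²Φ(I)`, the antisymmetric part of `F` then drops out of `D²Φ(I)[F, F]`.
-/

open scoped Topology

section Calculus

theorem mem_tangentConeAt_of_hasDerivAt {𝕜 E : Type*} [NontriviallyNormedField 𝕜]
    [NormedAddCommGroup E] [NormedSpace 𝕜 E] {γ : 𝕜 → E} {v : E} {t : 𝕜} {s : Set E}
    (hγ : HasDerivAt γ v t) (hs : ∀ᶠ u in 𝓝 t, γ u ∈ s) : v ∈ tangentConeAt 𝕜 s (γ t) := by
  have hone : (1 : 𝕜) ∈ tangentConeAt 𝕜 (γ ⁻¹' s) t := by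
    rw [tangentConeAt_of_mem_nhds (s := γ ⁻¹' s) hs]
    exact Set.mem_univ 1
  have hv : v ∈ tangentConeAt 𝕜 (γ '' (γ ⁻¹' s)) (γ t) := by
    simpa using hγ.hasFDerivAt.hasFDerivWithinAt.mapsTo_tangent_cone hone
  exact tangentConeAt_mono (Set.image_preimage_subset γ s) hv

theorem mem_tangentConeAt_one_of_exp_smul_mem {𝕜 𝔸 : Type*} [RCLike 𝕜] [NormedRing 𝔸]
    [NormedAlgebra 𝕜 𝔸] [CompleteSpace 𝔸] {x : 𝔸} {s : Set 𝔸}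
    (hs : ∀ t : 𝕜, NormedSpace.exp (t • x) ∈ s) : x ∈ tangentConeAt 𝕜 s 1 := by
  have hderiv : HasDerivAt (fun t : 𝕜 => NormedSpace.exp (t • x)) x 0 := by
    simpa using hasDerivAt_exp_smul_const (𝕂 := 𝕜) x 0
  simpa using mem_tangentConeAt_of_hasDerivAt hderiv (.of_forall hs)

theorem fderiv_apply_eq_zero_of_mem_tangentConeAt {𝕜 E G : Type*} [NontriviallyNormedField 𝕜]
    [NormedAddCommGroup E] [NormedSpace 𝕜 E] [NormedAddCommGroup G] [NormedSpace 𝕜 G]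
    {g : E → G} {s : Set E} {x v : E} (hg : DifferentiableAt 𝕜 g x) (hx : x ∈ s)
    (hzero : ∀ᶠ y in 𝓝[s] x, g y = 0) (hv : v ∈ tangentConeAt 𝕜 s x) : fderiv 𝕜 g x v = 0 := by
  have hg_zero : HasFDerivWithinAt g (0 : E →L[𝕜] G) s x :=
    (hasFDerivWithinAt_const (0 : G) x s).congr_of_eventuallyEq hzero (hzero.self_of_nhdsWithin hx)
  exact hg.hasFDerivAt.hasFDerivWithinAt.unique_on hg_zero hv

theorem iteratedFDeriv_two_add_self_of_mem_tangentConeAt {𝕜 E G : Type*} [RCLike 𝕜]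
    [NormedAddCommGroup E] [NormedSpace 𝕜 E] [NormedAddCommGroup G] [NormedSpace 𝕜 G]
    {f : E → G} {s : Set E} {x v : E} (hf : ContDiffAt 𝕜 2 f x) (hx : x ∈ s)
    (hcrit : ∀ᶠ y in 𝓝[s] x, fderiv 𝕜 f y = 0) (hv : v ∈ tangentConeAt 𝕜 s x) (u : E) :
    iteratedFDeriv 𝕜 2 f x ![u + v, u + v] = iteratedFDeriv 𝕜 2 f x ![u, u] := by
  have hdiff : DifferentiableAt 𝕜 (fderiv 𝕜 f) x :=
    (hf.fderiv_right (m := 1) (by norm_num)).differentiableAt one_ne_zero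
  have hleft : fderiv 𝕜 (fderiv 𝕜 f) x v = 0 :=
    fderiv_apply_eq_zero_of_mem_tangentConeAt hdiff hx hcrit hv
  have hright : fderiv 𝕜 (fderiv 𝕜 f) x u v = 0 := by
    simpa [hleft] using (hf.isSymmSndFDerivAt (by simp)).eq u v
  simp [iteratedFDeriv_two_apply, hleft, hright]

theorem fderiv_eq_zero_of_nonneg {E : Type*} [NormedAddCommGroup E] [NormedSpace ℝ E]
    {f : E → ℝ} {x : E} (hf : ∀ y, 0 ≤ f y) (hx : f x = 0) : fderiv ℝ f x = 0 :=
  IsLocalMin.fderiv_eq_zero (.of_forall fun y => hx.trans_le (hf y))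

end Calculus

section SpecialOrthogonal

theorem coe_specialOrthogonalGroup_eq_SOd (d : ℕ) :
    (specialOrthogonalGroup (Fin d) ℝ : Set (Matrix (Fin d) (Fin d) ℝ)) = SOd d :=
  Set.ext fun _ => and_congr_left fun _ => mem_orthogonalGroup_iff' _ _

variable {n : Type*} [Fintype n] [DecidableEq n]

section Exp

variable {𝔸 : Type*} [NormedCommRing 𝔸] [NormedAlgebra ℚ 𝔸] [CompleteSpace 𝔸] {A : Matrix n n 𝔸}

theorem transpose_exp_mul_exp_of_transpose_eq_neg (hA : Aᵀ = -A) :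
    (NormedSpace.exp A)ᵀ * NormedSpace.exp A = 1 := by
  rw [← exp_transpose, hA, ← exp_add_of_commute _ _ (Commute.refl A).neg_left, neg_add_cancel,
    NormedSpace.exp_zero]

theorem det_exp_of_transpose_eq_neg (hA : Aᵀ = -A) : (NormedSpace.exp A).det = 1 := by
  -- Orthogonality only gives `det ^ 2 = 1`, but `exp A` is the square of `exp (A / 2)`.
  have hhalf : ((1 / 2 : ℚ) • A)ᵀ = -((1 / 2 : ℚ) • A) := by rw [transpose_smul, hA, smul_neg]
  calc (NormedSpace.exp A).det
      = (NormedSpace.exp ((1 / 2 : ℚ) • A + (1 / 2 : ℚ) • A)).det := by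
        rw [← add_smul, add_halves, one_smul]
    _ = ((NormedSpace.exp ((1 / 2 : ℚ) • A))ᵀ * NormedSpace.exp ((1 / 2 : ℚ) • A)).det := by
        rw [exp_add_of_commute _ _ (Commute.refl _), det_mul, det_mul, det_transpose]
    _ = 1 := by rw [transpose_exp_mul_exp_of_transpose_eq_neg hhalf, det_one]

theorem exp_mem_specialOrthogonalGroup (hA : Aᵀ = -A) :
    NormedSpace.exp A ∈ specialOrthogonalGroup n 𝔸 :=
  ⟨(mem_orthogonalGroup_iff' _ _).2 (transpose_exp_mul_exp_of_transpose_eq_neg hA),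
    det_exp_of_transpose_eq_neg hA⟩

end Exp

attribute [local instance] Matrix.frobeniusNormedRing Matrix.frobeniusNormedAlgebra in
theorem mem_tangentConeAt_specialOrthogonalGroup_one {W : Matrix n n ℝ} (hW : Wᵀ = -W) :
    W ∈ tangentConeAt ℝ (specialOrthogonalGroup n ℝ : Set (Matrix n n ℝ)) 1 :=
  mem_tangentConeAt_one_of_exp_smul_mem fun t =>
    exp_mem_specialOrthogonalGroup (by rw [transpose_smul, hW, smul_neg])

end SpecialOrthogonal

theorem stmt6_general {n G : Type*} [Fintype n] [DecidableEq n] [NormedAddCommGroup G]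
    [NormedSpace ℝ G] {Φ : Matrix n n ℝ → G} (hΦ : ContDiffAt ℝ 2 Φ 1)
    (hcrit : ∀ᶠ R in 𝓝[specialOrthogonalGroup n ℝ] 1, fderiv ℝ Φ R = 0) (F : Matrix n n ℝ) :
    iteratedFDeriv ℝ 2 Φ 1 ![F, F] =
        iteratedFDeriv ℝ 2 Φ 1 ![((1 : ℝ) / 2) • (F + Fᵀ), ((1 : ℝ) / 2) • (F + Fᵀ)] ∧
      (Fᵀ = -F → iteratedFDeriv ℝ 2 Φ 1 ![F, F] = 0) := by
  have hsymm : iteratedFDeriv ℝ 2 Φ 1 ![F, F] =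
      iteratedFDeriv ℝ 2 Φ 1 ![((1 : ℝ) / 2) • (F + Fᵀ), ((1 : ℝ) / 2) • (F + Fᵀ)] := by
    have hskew : (((1 : ℝ) / 2) • (F - Fᵀ))ᵀ = -(((1 : ℝ) / 2) • (F - Fᵀ)) := by
      rw [transpose_smul, transpose_sub, transpose_transpose, ← smul_neg, neg_sub]
    have hdecomp : ((1 : ℝ) / 2) • (F + Fᵀ) + ((1 : ℝ) / 2) • (F - Fᵀ) = F := by module
    simpa only [hdecomp] using iteratedFDeriv_two_add_self_of_mem_tangentConeAt hΦ (one_mem _)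
      hcrit (mem_tangentConeAt_specialOrthogonalGroup_one hskew) (((1 : ℝ) / 2) • (F + Fᵀ))
  refine ⟨hsymm, fun hF => ?_⟩
  rw [hsymm, hF, add_neg_cancel, smul_zero]
  exact ContinuousMultilinearMap.map_coord_zero _ 0 rfl

/-- Let `d ≥ 2` and let `Φ : ℝ^{d×d} → ℝ` be twice continuously differentiable on a neighborhood
of the identity, nonnegative, vanishing on `SO(d)`, and frame-indifferent. Then
`D²Φ(I)[F, F] = D²Φ(I)[F_sym, F_sym]` for every `F`, where `F_sym = (F + Fᵀ)/2`; in particular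
`D²Φ(I)[F, F] = 0` whenever `F` is antisymmetric. -/
theorem stmt6 (d : ℕ) (hd : 2 ≤ d) (Φ : Matrix (Fin d) (Fin d) ℝ → ℝ)
    (U : Set (Matrix (Fin d) (Fin d) ℝ)) (hUopen : IsOpen U)
    (h1U : (1 : Matrix (Fin d) (Fin d) ℝ) ∈ U) (hC2 : ContDiffOn ℝ 2 Φ U)
    (hnonneg : ∀ F, 0 ≤ Φ F)
    (hSO : ∀ R ∈ SOd d, Φ R = 0)
    (hframe : ∀ Q ∈ SOd d, ∀ F : Matrix (Fin d) (Fin d) ℝ, Φ (Q * F) = Φ F) :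
    ∀ F : Matrix (Fin d) (Fin d) ℝ,
      iteratedFDeriv ℝ 2 Φ 1 ![F, F] =
        iteratedFDeriv ℝ 2 Φ 1 ![((1:ℝ)/2) • (F + Fᵀ), ((1:ℝ)/2) • (F + Fᵀ)] ∧
      (Fᵀ = -F → iteratedFDeriv ℝ 2 Φ 1 ![F, F] = 0) :=
  stmt6_general (hC2.contDiffAt (hUopen.mem_nhds h1U)) <|
    eventually_mem_nhdsWithin.mono fun _ hR =>
      fderiv_eq_zero_of_nonneg hnonneg (hSO _ (coe_specialOrthogonalGroup_eq_SOd d ▸ hR))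
end

section
/- Let d ≥ 2 and p ≥ 2, and let Φ : ℝ^{d×d} → ℝ be twice continuously differentiable on a neighborhood of the identity matrix I, with Φ(I) = 0, and satisfying Φ(F) ≥ g_p(dist(F, SO(d))) for every F ∈ ℝ^{d×d}. Then for every symmetric matrix S ∈ ℝ^{d×d} one has D²Φ(I)[S, S] ≥ |S|², where |S| is the Frobenius norm. -/
open Matrix

attribute [local instance] Matrix.frobeniusNormedAddCommGroup Matrix.frobeniusNormedSpace

/-!
For unitary `U`, splitting `FᴴF - 1 = FᴴF - UᴴU` shows that `FᴴF` can only be far from the identity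
if `F` is far from `U`; this avoids the polar decomposition. Along `F = 1 + tS` one has
`FᴴF - 1 = t(S + Sᴴ) + t²SᴴS`, so the distance from `F` to the unitary group is at least
`|t| |(S + Sᴴ)/2| + o(t)`. Since `Φ` is critical at the identity, `2Φ(1 + tS)/t²` tends to
`D²Φ(1)[S, S]`, while coercivity bounds it below by `|(S + Sᴴ)/2|² + o(1)`.
-/

open Filter Topology

section SecondOrderExpansion

variable {E : Type*} [NormedAddCommGroup E] [NormedSpace ℝ E] {f : E → ℝ} {x : E}

lemma tendsto_second_order_taylor_quotient (hf : ContDiffAt ℝ 2 f x) (v : E) :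
    Tendsto (fun t : ℝ => (f (x + t • v) - f x - t * fderiv ℝ f x v) / t ^ 2) (𝓝[≠] 0)
      (𝓝 (iteratedFDeriv ℝ 2 f x ![v, v] / 2)) := by
  have hline (t : ℝ) : HasDerivAt (fun t : ℝ => x + t • v) v t := by
    simpa using ((hasDerivAt_id t).smul_const v).const_add x
  have hline_zero : Tendsto (fun t : ℝ => x + t • v) (𝓝 0) (𝓝 x) := by
    simpa using (hline 0).continuousAt.tendsto
  have hderiv : ∀ᶠ t : ℝ in 𝓝 0, HasDerivAt
      (fun t => f (x + t • v) - f x - t * fderiv ℝ f x v)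
      (fderiv ℝ f (x + t • v) v - fderiv ℝ f x v) t := by
    filter_upwards [hline_zero.eventually (hf.eventually (by simp))] with t ht
    have hft := (ht.differentiableAt two_ne_zero).hasFDerivAt.comp_hasDerivAt t (hline t)
    exact (hft.sub_const _).sub (hasDerivAt_mul_const _)
  have hsecond : HasDerivAt (fun t : ℝ => fderiv ℝ f (x + t • v) v)
      (iteratedFDeriv ℝ 2 f x ![v, v]) 0 := by
    have hfderiv : DifferentiableAt ℝ (fderiv ℝ f) x :=
      (hf.fderiv_right (m := 1) one_add_one_eq_two.le).differentiableAt one_ne_zero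
    simpa [iteratedFDeriv_two_apply, HasLineDerivAt] using
      (hfderiv.hasFDerivAt.hasLineDerivAt v).clm_apply (hasDerivAt_const (0 : ℝ) v)
  refine HasDerivAt.lhopital_zero_nhdsNE (g' := fun t => 2 * t)
    (hderiv.filter_mono nhdsWithin_le_nhds) (.of_forall fun t => ?_) ?_
    (tendsto_nhdsWithin_of_tendsto_nhds ?_) (tendsto_nhdsWithin_of_tendsto_nhds ?_) ?_
  · simpa using hasDerivAt_pow 2 t
  · filter_upwards [self_mem_nhdsWithin] with t ht using mul_ne_zero two_ne_zero ht
  · simpa using hderiv.self_of_nhds.continuousAt.tendsto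
  · simpa using (continuous_pow 2).tendsto (0 : ℝ)
  · refine (hsecond.tendsto_slope_zero.div_const 2).congr fun t => ?_
    simp only [zero_add, zero_smul, add_zero, smul_eq_mul]
    ring

lemma le_iteratedFDeriv_two_of_sq_mul_le (hf : ContDiffAt ℝ 2 f x) {v : E}
    (hcrit : fderiv ℝ f x v = 0) {φ : ℝ → ℝ} {k : ℝ} (hφ : Tendsto φ (𝓝[≠] 0) (𝓝 k))
    (hle : ∀ᶠ t : ℝ in 𝓝[≠] 0, t ^ 2 * φ t / 2 ≤ f (x + t • v) - f x) :
    k ≤ iteratedFDeriv ℝ 2 f x ![v, v] := by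
  have hquot : ∀ᶠ t : ℝ in 𝓝[≠] 0,
      φ t / 2 ≤ (f (x + t • v) - f x - t * fderiv ℝ f x v) / t ^ 2 := by
    filter_upwards [hle, self_mem_nhdsWithin] with t ht ht0
    rw [hcrit, mul_zero, sub_zero, le_div_iff₀' (even_two.pow_pos ht0), mul_div_assoc']
    exact ht
  linarith [le_of_tendsto_of_tendsto (hφ.div_const 2)
    (tendsto_second_order_taylor_quotient hf v) hquot]

end SecondOrderExpansion

section DistanceToUnitaryGroup

variable {𝕜 m n : Type*} [RCLike 𝕜] [Fintype m] [Fintype n]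

lemma frobenius_norm_sq_eq_trace (A : Matrix m n 𝕜) : ((‖A‖ ^ 2 : ℝ) : 𝕜) = (Aᴴ * A).trace := by
  rw [frobenius_norm_def, ← Real.sqrt_eq_rpow, Real.sq_sqrt (by positivity), Finset.sum_comm]
  simp [trace, mul_apply, RCLike.conj_mul]

lemma frobenius_norm_conjTranspose_unitary_mul [DecidableEq m] {U : Matrix m m 𝕜}
    (hU : U ∈ unitaryGroup m 𝕜) (A : Matrix m n 𝕜) : ‖Uᴴ * A‖ = ‖A‖ := by
  have hUU : U * Uᴴ = 1 := mem_unitaryGroup_iff.1 hU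
  rw [← sq_eq_sq₀ (norm_nonneg _) (norm_nonneg _), ← RCLike.ofReal_inj (K := 𝕜),
    frobenius_norm_sq_eq_trace, frobenius_norm_sq_eq_trace, conjTranspose_mul,
    conjTranspose_conjTranspose, Matrix.mul_assoc, ← Matrix.mul_assoc U, hUU, Matrix.one_mul]

lemma tendsto_norm_add_conjTranspose_add_smul_div (S : Matrix n n 𝕜) :
    Tendsto (fun t : ℝ => ‖S + Sᴴ + t • (Sᴴ * S)‖ / (2 + ‖t • S‖)) (𝓝 0)
      (𝓝 ‖(selfAdjointPart ℝ S : Matrix n n 𝕜)‖) := by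
  have hcont : Continuous fun t : ℝ => ‖S + Sᴴ + t • (Sᴴ * S)‖ / (2 + ‖t • S‖) :=
    Continuous.div (by fun_prop) (by fun_prop) fun t => by positivity
  refine hcont.tendsto' 0 _ ?_
  rw [selfAdjointPart_apply_coe, norm_smul (⅟2 : ℝ)]
  simp [star_eq_conjTranspose, div_eq_inv_mul]

variable [DecidableEq n]

lemma norm_conjTranspose_mul_self_sub_one_le (F : Matrix n n 𝕜) {U : Matrix n n 𝕜}
    (hU : U ∈ unitaryGroup n 𝕜) : ‖Fᴴ * F - 1‖ ≤ ‖F - U‖ * (2 + ‖F - 1‖) := by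
  have hUU : Uᴴ * U = 1 := mem_unitaryGroup_iff'.1 hU
  have hsplit : Fᴴ * F - 1 = (F - U)ᴴ + (F - U)ᴴ * (F - 1) + Uᴴ * (F - U) := by
    simp only [conjTranspose_sub, Matrix.sub_mul, Matrix.mul_sub, Matrix.mul_one, hUU]
    abel
  calc ‖Fᴴ * F - 1‖
      ≤ ‖(F - U)ᴴ‖ + ‖(F - U)ᴴ * (F - 1)‖ + ‖Uᴴ * (F - U)‖ := hsplit ▸ norm_add₃_le
    _ ≤ ‖F - U‖ + ‖F - U‖ * ‖F - 1‖ + ‖F - U‖ := by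
      rw [frobenius_norm_conjTranspose_unitary_mul hU, frobenius_norm_conjTranspose]
      gcongr
      simpa only [frobenius_norm_conjTranspose] using frobenius_norm_mul (F - U)ᴴ (F - 1)
    _ = ‖F - U‖ * (2 + ‖F - 1‖) := by ring

lemma norm_conjTranspose_mul_self_sub_one_div_le_infDist (F : Matrix n n 𝕜) :
    ‖Fᴴ * F - 1‖ / (2 + ‖F - 1‖) ≤ Metric.infDist F (unitaryGroup n 𝕜) := by
  refine (Metric.le_infDist ⟨1, one_mem _⟩).2 fun U hU => ?_
  rw [dist_eq_norm, div_le_iff₀ (by positivity)]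
  exact norm_conjTranspose_mul_self_sub_one_le F hU

lemma abs_mul_div_le_infDist_one_add_smul_unitaryGroup (S : Matrix n n 𝕜) (t : ℝ) :
    |t| * (‖S + Sᴴ + t • (Sᴴ * S)‖ / (2 + ‖t • S‖)) ≤
      Metric.infDist (1 + t • S) (unitaryGroup n 𝕜) := by
  have hgram : (1 + t • S)ᴴ * (1 + t • S) - 1 = t • (S + Sᴴ + t • (Sᴴ * S)) := by
    rw [conjTranspose_add, conjTranspose_one, conjTranspose_smul, star_trivial]
    simp only [Matrix.add_mul, Matrix.mul_add, Matrix.one_mul, Matrix.mul_one, Matrix.smul_mul,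
      Matrix.mul_smul, smul_add]
    abel
  have hdist := norm_conjTranspose_mul_self_sub_one_div_le_infDist (1 + t • S)
  rwa [hgram, add_sub_cancel_left, norm_smul t (_ + _), Real.norm_eq_abs, mul_div_assoc] at hdist

end DistanceToUnitaryGroup

theorem stmt7_general {𝕜 n : Type*} [RCLike 𝕜] [Fintype n] [DecidableEq n]
    {Φ : Matrix n n 𝕜 → ℝ} (hΦ : ContDiffAt ℝ 2 Φ 1) (hΦ1 : Φ 1 = 0)
    (hcoer : ∀ᶠ F in 𝓝 1, Metric.infDist F (unitaryGroup n 𝕜) ^ 2 / 2 ≤ Φ F)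
    (S : Matrix n n 𝕜) :
    ‖(selfAdjointPart ℝ S : Matrix n n 𝕜)‖ ^ 2 ≤ iteratedFDeriv ℝ 2 Φ 1 ![S, S] := by
  have hmin : IsLocalMin Φ 1 := by
    filter_upwards [hcoer] with F hF
    exact hΦ1.trans_le ((by positivity : (0 : ℝ) ≤ _).trans hF)
  have hline : Tendsto (fun t : ℝ => 1 + t • S) (𝓝[≠] 0) (𝓝 1) :=
    tendsto_nhdsWithin_of_tendsto_nhds <| Continuous.tendsto' (by fun_prop) _ _ (by simp)
  refine le_iteratedFDeriv_two_of_sq_mul_le hΦ (by simp [hmin.fderiv_eq_zero])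
    (tendsto_nhdsWithin_of_tendsto_nhds
      ((tendsto_norm_add_conjTranspose_add_smul_div S).pow 2)) ?_
  filter_upwards [hline.eventually hcoer] with t ht
  rw [hΦ1, sub_zero, ← sq_abs t, ← mul_pow]
  refine le_trans ?_ ht
  gcongr
  exact abs_mul_div_le_infDist_one_add_smul_unitaryGroup S t

lemma one_mem_SOd (d : ℕ) : (1 : Matrix (Fin d) (Fin d) ℝ) ∈ SOd d := by
  simp [SOd]

lemma SOd_subset_unitaryGroup (d : ℕ) : SOd d ⊆ unitaryGroup (Fin d) ℝ :=
  fun _ hQ => mem_unitaryGroup_iff'.2 hQ.1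

lemma eventually_infDist_unitaryGroup_sq_div_two_le_gp (d : ℕ) (p : ℝ) :
    ∀ᶠ F in 𝓝 (1 : Matrix (Fin d) (Fin d) ℝ),
      Metric.infDist F (unitaryGroup (Fin d) ℝ) ^ 2 / 2 ≤ gp p (Metric.infDist F (SOd d)) := by
  filter_upwards [Metric.closedBall_mem_nhds _ one_pos] with F hF
  have hnear : Metric.infDist F (SOd d) ≤ 1 :=
    (Metric.infDist_le_dist_of_mem (one_mem_SOd d)).trans hF
  rw [gp, if_pos hnear]
  gcongr
  · exact Metric.infDist_nonneg
  · exact Metric.infDist_le_infDist_of_subset (SOd_subset_unitaryGroup d) ⟨1, one_mem_SOd d⟩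

/-- Let `d ≥ 2`, `p ≥ 2`, and let `Φ` be twice continuously differentiable on a neighborhood of
the identity, with `Φ(I) = 0` and `Φ(F) ≥ g_p(dist(F, SO(d)))` (Frobenius distance) for every
`F`. Then for every symmetric `S` one has `D²Φ(I)[S, S] ≥ |S|²` (Frobenius norm). -/
theorem stmt7 (d : ℕ) (hd : 2 ≤ d) (p : ℝ) (hp : 2 ≤ p)
    (Φ : Matrix (Fin d) (Fin d) ℝ → ℝ)
    (U : Set (Matrix (Fin d) (Fin d) ℝ)) (hUopen : IsOpen U)
    (h1U : (1 : Matrix (Fin d) (Fin d) ℝ) ∈ U) (hC2 : ContDiffOn ℝ 2 Φ U)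
    (hΦ1 : Φ 1 = 0)
    (hcoer : ∀ F : Matrix (Fin d) (Fin d) ℝ, gp p (Metric.infDist F (SOd d)) ≤ Φ F)
    (S : Matrix (Fin d) (Fin d) ℝ) (hS : Sᵀ = S) :
    ‖S‖ ^ 2 ≤ iteratedFDeriv ℝ 2 Φ 1 ![S, S] := by
  have h := stmt7_general (hC2.contDiffAt (hUopen.mem_nhds h1U)) hΦ1
    ((eventually_infDist_unitaryGroup_sq_div_two_le_gp d p).mono fun F hF => hF.trans (hcoer F)) S
  rwa [IsSelfAdjoint.coe_selfAdjointPart_apply ℝ (show IsSelfAdjoint S from hS)] at h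
end

section
/- Let d ≥ 2 and K > 0. Then there exists a constant C > 0, depending only on d and K, such that for every A ∈ ℝ^{d×d} with ‖A‖ ≤ K, every ε ∈ (0, 1], and every F ∈ ℝ^{d×d}, it holds dist(F, SO(d)) ≤ C · dist(exp(εA) F, SO(d)) + C ε, where ‖·‖ is the Frobenius norm. -/
open Matrix

attribute [local instance] Matrix.frobeniusNormedAddCommGroup Matrix.frobeniusNormedSpace

/-!
If `U * x` is near `s ∈ S` and `U⁻¹` is near `1`, then `x` is near `s`, because
`x - s = U⁻¹ * (U * x - s) + (U⁻¹ - 1) * s`. For `U = exp (ε • a)` the deviation `‖U⁻¹ - 1‖` is at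
most `exp (ε * ‖a‖) - 1`, which is `O(ε)` by convexity of `exp`, and boundedness of `S` makes the
second term `O(ε)` uniformly in `s`. The orthogonal matrices form a bounded set since their rows are
unit vectors.
-/

open Metric NormedSpace
open scoped Nat

theorem infDist_le_of_mul_eq_one {R : Type*} [SeminormedRing R] {S : Set R} (hS : S.Nonempty)
    {r : ℝ} (hr : ∀ s ∈ S, ‖s‖ ≤ r) {u v : R} (hvu : v * u = 1) (x : R) :
    infDist x S ≤ (1 + ‖v - 1‖) * infDist (u * x) S + ‖v - 1‖ * r := by
  suffices (infDist x S - ‖v - 1‖ * r) / (1 + ‖v - 1‖) ≤ infDist (u * x) S by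
    rw [div_le_iff₀' (by positivity)] at this
    linarith
  refine (le_infDist hS).2 fun s hs ↦ ?_
  -- Writing `v = 1 + (v - 1)` keeps `‖1‖` out of the bound: it is `√d` for the Frobenius norm.
  have hdecomp : x - s = (u * x - s) + (v - 1) * (u * x - s) + (v - 1) * s := by
    linear_combination (norm := noncomm_ring) -hvu * x
  have hdist : dist x s ≤ (1 + ‖v - 1‖) * dist (u * x) s + ‖v - 1‖ * r := by
    simp only [dist_eq_norm]
    calc
      ‖x - s‖ ≤ ‖u * x - s‖ + ‖(v - 1) * (u * x - s)‖ + ‖(v - 1) * s‖ :=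
        hdecomp ▸ norm_add₃_le
      _ ≤ ‖u * x - s‖ + ‖v - 1‖ * ‖u * x - s‖ + ‖v - 1‖ * r := by
        gcongr
        · exact norm_mul_le _ _
        · exact norm_mul_le_of_le le_rfl (hr s hs)
      _ = (1 + ‖v - 1‖) * ‖u * x - s‖ + ‖v - 1‖ * r := by ring
  rw [div_le_iff₀' (by positivity), sub_le_iff_le_add]
  exact (infDist_le_dist_of_mem hs).trans hdist

section Exponential

variable {R : Type*} [NormedRing R] [NormedAlgebra ℚ R] [CompleteSpace R]

theorem norm_exp_sub_one_le (a : R) : ‖exp a - 1‖ ≤ Real.exp ‖a‖ - 1 := by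
  have hexp : HasSum (fun n : ℕ ↦ ((n + 1)!⁻¹ : ℚ) • a ^ (n + 1)) (exp a - 1) := by
    simpa using (hasSum_nat_add_iff' 1).2 (exp_series_hasSum_exp' (𝕂 := ℚ) a)
  have hexp_norm : HasSum (fun n : ℕ ↦ ‖a‖ ^ (n + 1) / (n + 1)!) (Real.exp ‖a‖ - 1) := by
    simpa [Real.exp_eq_exp_ℝ] using (hasSum_nat_add_iff' 1).2 (expSeries_div_hasSum_exp ‖a‖)
  refine hexp.norm_le_of_bounded hexp_norm fun n ↦ ?_
  calc
    ‖((n + 1)!⁻¹ : ℚ) • a ^ (n + 1)‖ ≤ ‖((n + 1)!⁻¹ : ℚ)‖ * ‖a ^ (n + 1)‖ :=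
      norm_smul_le _ _
    _ ≤ ((n + 1)! : ℝ)⁻¹ * ‖a‖ ^ (n + 1) := by
      gcongr
      · rw [norm_inv, ← Rat.norm_cast_real, Rat.cast_natCast, RCLike.norm_natCast]
      · exact norm_pow_le' a n.succ_pos
    _ = ‖a‖ ^ (n + 1) / (n + 1)! := by rw [div_eq_inv_mul]

theorem infDist_le_exp_norm_mul_infDist_exp_mul_add {S : Set R} (hS : S.Nonempty) {r : ℝ}
    (hr : ∀ s ∈ S, ‖s‖ ≤ r) (a x : R) :
    infDist x S ≤ Real.exp ‖a‖ * infDist (exp a * x) S + (Real.exp ‖a‖ - 1) * r := by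
  obtain ⟨s, hs⟩ := hS
  have hr₀ : 0 ≤ r := (norm_nonneg s).trans (hr s hs)
  have hinv : exp (-a) * exp a = 1 := by
    rw [← exp_add_of_commute (Commute.refl a).neg_left, neg_add_cancel, exp_zero]
  have hnear : ‖exp (-a) - 1‖ ≤ Real.exp ‖a‖ - 1 := norm_neg a ▸ norm_exp_sub_one_le (-a)
  calc
    infDist x S ≤ (1 + ‖exp (-a) - 1‖) * infDist (exp a * x) S + ‖exp (-a) - 1‖ * r :=
      infDist_le_of_mul_eq_one ⟨s, hs⟩ hr hinv x
    _ ≤ Real.exp ‖a‖ * infDist (exp a * x) S + (Real.exp ‖a‖ - 1) * r := by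
      gcongr
      · exact infDist_nonneg
      · linarith

end Exponential

theorem exp_mul_sub_one_le {t : ℝ} (ht₀ : 0 ≤ t) (ht₁ : t ≤ 1) (x : ℝ) :
    Real.exp (t * x) - 1 ≤ t * (Real.exp x - 1) := by
  have hconv := convexOn_exp.2 (Set.mem_univ x) (Set.mem_univ 0) ht₀ (sub_nonneg.2 ht₁)
    (add_sub_cancel t 1)
  simp only [smul_eq_mul, mul_zero, add_zero, Real.exp_zero, mul_one] at hconv
  linarith

section Frobenius

variable {n 𝕜 : Type*} [Fintype n] [DecidableEq n] [RCLike 𝕜]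

theorem sum_norm_sq_row_of_mem_unitaryGroup {U : Matrix n n 𝕜} (hU : U ∈ unitaryGroup n 𝕜) (i : n) :
    ∑ j, ‖U i j‖ ^ 2 = 1 := by
  have hdiag : (U * star U) i i = 1 := by rw [mem_unitaryGroup_iff.1 hU, one_apply_eq]
  simp only [mul_apply, star_apply, RCLike.star_def, RCLike.mul_conj] at hdiag
  exact_mod_cast hdiag

theorem frobenius_norm_of_mem_unitaryGroup {U : Matrix n n 𝕜} (hU : U ∈ unitaryGroup n 𝕜) :
    ‖U‖ = √(Fintype.card n) := by
  simp only [frobenius_norm_def, Real.rpow_two, sum_norm_sq_row_of_mem_unitaryGroup hU,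
    Finset.sum_const, Finset.card_univ, nsmul_eq_mul, mul_one, Real.sqrt_eq_rpow]

end Frobenius

theorem SOd_nonempty (d : ℕ) : (SOd d).Nonempty :=
  ⟨1, by simp [SOd]⟩

theorem isBounded_SOd (d : ℕ) : Bornology.IsBounded (SOd d) :=
  isBounded_iff_forall_norm_le.2
    ⟨√(Fintype.card (Fin d)), fun _ hQ ↦
      (frobenius_norm_of_mem_unitaryGroup (mem_unitaryGroup_iff'.2 hQ.1)).le⟩

theorem stmt12_general {𝔸 : Type*} [NormedRing 𝔸] [NormedAlgebra ℝ 𝔸] [CompleteSpace 𝔸] {S : Set 𝔸}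
    (hS : S.Nonempty) (hSb : Bornology.IsBounded S) (K : ℝ) :
    ∃ C : ℝ, 0 < C ∧ ∀ a : 𝔸, ‖a‖ ≤ K → ∀ ε : ℝ, 0 ≤ ε → ε ≤ 1 → ∀ x : 𝔸,
      infDist x S ≤ C * infDist (exp (ε • a) * x) S + C * ε := by
  let +nondep : NormedAlgebra ℚ 𝔸 := .restrictScalars ℚ ℝ 𝔸
  obtain ⟨r, hr₀, hr⟩ := hSb.exists_pos_norm_le
  refine ⟨Real.exp K * (1 + r), by positivity, fun a ha ε hε₀ hε₁ x ↦ ?_⟩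
  have hnorm : ‖ε • a‖ ≤ ε * K := by
    rw [norm_smul_of_nonneg hε₀]
    gcongr
  have hfactor : Real.exp ‖ε • a‖ ≤ Real.exp K * (1 + r) := calc
    Real.exp ‖ε • a‖ ≤ Real.exp K := by
      gcongr
      exact hnorm.trans (mul_le_of_le_one_left ((norm_nonneg a).trans ha) hε₁)
    _ ≤ Real.exp K * (1 + r) := le_mul_of_one_le_right (by positivity) (by linarith)
  have herror : (Real.exp ‖ε • a‖ - 1) * r ≤ Real.exp K * (1 + r) * ε := calc
    (Real.exp ‖ε • a‖ - 1) * r ≤ (Real.exp (ε * K) - 1) * r := by gcongr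
    _ ≤ ε * (Real.exp K - 1) * r := by
      gcongr
      exact exp_mul_sub_one_le hε₀ hε₁ K
    _ ≤ ε * Real.exp K * (1 + r) := by
      gcongr <;> linarith
    _ = Real.exp K * (1 + r) * ε := by ring
  calc
    infDist x S ≤ Real.exp ‖ε • a‖ * infDist (exp (ε • a) * x) S + (Real.exp ‖ε • a‖ - 1) * r :=
      infDist_le_exp_norm_mul_infDist_exp_mul_add hS hr (ε • a) x
    _ ≤ Real.exp K * (1 + r) * infDist (exp (ε • a) * x) S + Real.exp K * (1 + r) * ε :=
      add_le_add (mul_le_mul_of_nonneg_right hfactor infDist_nonneg) herror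

/-- Let `d ≥ 2` and `K > 0`. Then there is `C > 0`, depending only on `d` and `K`, such that for
every `A` with `‖A‖ ≤ K`, every `ε ∈ (0, 1]`, and every `F`, it holds
`dist(F, SO(d)) ≤ C · dist(exp(εA) F, SO(d)) + C ε` (Frobenius norm and distance). -/
theorem stmt12 (d : ℕ) (hd : 2 ≤ d) (K : ℝ) (hK : 0 < K) :
    ∃ C : ℝ, 0 < C ∧ ∀ A : Matrix (Fin d) (Fin d) ℝ, ‖A‖ ≤ K →
      ∀ ε : ℝ, 0 < ε → ε ≤ 1 → ∀ F : Matrix (Fin d) (Fin d) ℝ,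
        Metric.infDist F (SOd d) ≤
          C * Metric.infDist (NormedSpace.exp (ε • A) * F) (SOd d) + C * ε := by
  let : NormedRing (Matrix (Fin d) (Fin d) ℝ) := frobeniusNormedRing
  let : NormedAlgebra ℝ (Matrix (Fin d) (Fin d) ℝ) := frobeniusNormedAlgebra
  obtain ⟨C, hC, h⟩ := stmt12_general (SOd_nonempty d) (isBounded_SOd d) K
  exact ⟨C, hC, fun A hA ε hε ↦ h A hA ε hε.le⟩
end

section
/- Let d ≥ 1, let Ω ⊂ ℝ^d be a bounded open set, and let y : closure(Ω) → ℝ^d be continuous. Let x ∈ Ω be such that |y(z) − z| < dist(x, ∂Ω) for every z ∈ closure(Ω). Then x ∈ y(Ω). -/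
/-!
If `r` is the distance from `x` to the boundary of `Ω`, then `z ↦ x + (z - y z)` maps the closed
ball of radius `r` about `x` to itself; a Brouwer fixed point `z` satisfies `y z = x`, and
`‖y z - z‖ < r` then puts `z` in the open ball, which lies in `Ω`.

Brouwer's theorem comes from Rogers' form of Milnor's argument: were `id + g` a `C¹` retraction of a
bounded convex open set `U` onto its boundary, then for small `t` the map `id + t g` would be a
bijection of `U`, so the polynomial `t ↦ ∫ det (1 + t g')` over `U` would equal the volume of `U`
for small `t`, hence also at `t = 1`, where the determinant vanishes identically.
-/

open Set Metric MeasureTheory Function Topology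
open scoped NNReal

universe u

theorem subset_of_disjoint_frontier {X : Type*} [TopologicalSpace X] {s t : Set X}
    (hs : IsPreconnected s) (hst : (s ∩ t).Nonempty) (hdisj : Disjoint s (frontier t)) :
    s ⊆ t := by
  have hcover : s ⊆ interior t ∪ (closure t)ᶜ := fun z hz =>
    or_iff_not_imp_right.2 fun hzt => by_contra fun hzi =>
      disjoint_left.1 hdisj hz ⟨not_not.1 hzt, hzi⟩
  obtain ⟨x, hxs, hxt⟩ := hst
  have hxi : x ∈ interior t := (hcover hxs).resolve_right (not_not.2 (subset_closure hxt))
  exact (hs.subset_left_of_subset_union isOpen_interior isClosed_closure.isOpen_compl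
    (disjoint_compl_right.mono_left interior_subset_closure) hcover ⟨x, hxs, hxi⟩).trans
    interior_subset

theorem ball_infDist_frontier_subset {E : Type*} [NormedAddCommGroup E] [NormedSpace ℝ E]
    {s : Set E} {x : E} (hx : x ∈ s) :
    ball x (infDist x (frontier s)) ⊆ s := by
  rcases (infDist_nonneg (x := x) (s := frontier s)).eq_or_lt with h | h
  · simp [← h]
  · exact subset_of_disjoint_frontier (convex_ball x _).isPreconnected
      ⟨x, mem_ball_self h, hx⟩ disjoint_ball_infDist

theorem lipschitzWith_indicator_of_eqOn_frontier {E F : Type*} [NormedAddCommGroup E]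
    [NormedSpace ℝ E] [NormedAddCommGroup F] {s : Set E} {f : E → F} {K : ℝ≥0}
    (hf : LipschitzOnWith K f (closure s)) (hf0 : EqOn f 0 (frontier s)) :
    LipschitzWith K (s.indicator f) := by
  have hmixed : ∀ x ∈ s, ∀ y ∉ s, dist (f x) 0 ≤ K * dist x y := by
    intro x hx y hy
    obtain ⟨w, hwxy, hw⟩ : (segment ℝ x y ∩ frontier s).Nonempty := by
      by_contra hdisj
      exact hy <| subset_of_disjoint_frontier (convex_segment x y).isPreconnected
        ⟨x, left_mem_segment ℝ x y, hx⟩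
        (disjoint_iff_inter_eq_empty.2 (not_nonempty_iff_eq_empty.1 hdisj))
        (right_mem_segment ℝ x y)
    calc dist (f x) 0 = dist (f x) (f w) := by rw [hf0 hw, Pi.zero_apply]
      _ ≤ K * dist x w := hf.dist_le_mul x (subset_closure hx) w (frontier_subset_closure hw)
      _ ≤ K * dist x y := by
        gcongr
        linarith [dist_add_dist_of_mem_segment hwxy, dist_nonneg (x := w) (y := y)]
  refine LipschitzWith.of_dist_le_mul fun x y => ?_
  by_cases hx : x ∈ s <;> by_cases hy : y ∈ s
  · rw [indicator_of_mem hx, indicator_of_mem hy]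
    exact hf.dist_le_mul x (subset_closure hx) y (subset_closure hy)
  · rw [indicator_of_mem hx, indicator_of_notMem hy]
    exact hmixed x hx y hy
  · rw [indicator_of_notMem hx, indicator_of_mem hy, dist_comm, dist_comm x]
    exact hmixed y hy x hx
  · rw [indicator_of_notMem hx, indicator_of_notMem hy, dist_self]
    positivity

theorem bijective_id_add_of_lipschitzWith {E : Type*} [NormedAddCommGroup E] [CompleteSpace E]
    {g : E → E} {K : ℝ≥0} (hg : LipschitzWith K g) (hK : K < 1) :
    Bijective fun z => z + g z := by
  refine ⟨(AntilipschitzWith.id.add_lipschitzWith hg (by simpa using hK)).injective, fun y => ?_⟩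
  have hcontr : ContractingWith K fun z => y - g z :=
    ⟨hK, by simpa using (LipschitzWith.const y).sub hg⟩
  exact ⟨hcontr.fixedPoint, eq_sub_iff_add_eq.1 hcontr.fixedPoint_isFixedPt.symm⟩

open Polynomial in
theorem exists_polynomial_eval_eq_det_one_add_smul {R M : Type*} [CommRing R] [Nontrivial R]
    [AddCommGroup M] [Module R M] [Module.Free R M] [Module.Finite R M] (A : M →ₗ[R] M) :
    ∃ p : R[X], p.natDegree ≤ Module.finrank R M ∧ ∀ t, p.eval t = LinearMap.det (1 + t • A) := by
  classical
  let b := Module.Free.chooseBasis R M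
  refine ⟨((X : R[X]) • (LinearMap.toMatrix b b A).map C + (1 : Matrix _ _ R).map C).det,
    ?_, fun t => ?_⟩
  · rw [Module.finrank_eq_card_chooseBasisIndex]
    exact natDegree_det_X_add_C_le _ _
  · rw [← coe_evalRingHom, RingHom.map_det, ← LinearMap.det_toMatrix b, map_add, map_add,
      LinearMap.toMatrix_one, add_comm]
    congr 2 <;> ext i j
    · simp only [RingHom.mapMatrix_apply, Matrix.map_apply, coe_evalRingHom, eval_C]
    · simp only [RingHom.mapMatrix_apply, Matrix.map_apply, Matrix.smul_apply, smul_eq_mul,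
        coe_evalRingHom, eval_mul, eval_X, eval_C, map_smul]

open Polynomial in
theorem integral_eval_eq_of_infinite {α : Type*} [MeasurableSpace α] {μ : Measure α}
    {p : α → ℝ[X]} {n : ℕ} (hp : ∀ a, (p a).natDegree ≤ n) {T : Set ℝ} (hT : T.Infinite) {c : ℝ}
    (hint : ∀ t ∈ T, Integrable (fun a => (p a).eval t) μ)
    (hc : ∀ t ∈ T, ∫ a, (p a).eval t ∂μ = c) (t : ℝ) :
    ∫ a, (p a).eval t ∂μ = c := by
  obtain ⟨s, hsT, hscard⟩ := hT.exists_subset_card_eq (n + 1)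
  have hs : s.Nonempty := Finset.card_pos.1 (by lia)
  have hinterp : ∀ a, (p a).eval t
      = ∑ i ∈ s, (p a).eval i * (Lagrange.basis s id i).eval t := by
    intro a
    have hdeg : (p a).degree < s.card :=
      degree_le_natDegree.trans_lt (by exact_mod_cast (hp a).trans_lt (by lia))
    conv_lhs => rw [Lagrange.eq_interpolate injective_id.injOn hdeg]
    simp [Lagrange.interpolate_apply, eval_finsetSum]
  calc ∫ a, (p a).eval t ∂μ
      = ∑ i ∈ s, (∫ a, (p a).eval i ∂μ) * (Lagrange.basis s id i).eval t := by
        simp_rw [hinterp]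
        rw [integral_finsetSum _ fun i hi => (hint i (hsT hi)).mul_const _]
        simp_rw [integral_mul_const]
    _ = c * (∑ i ∈ s, Lagrange.basis s id i).eval t := by
        rw [eval_finsetSum, Finset.mul_sum]
        exact Finset.sum_congr rfl fun i hi => by rw [hc i (hsT hi)]
    _ = c := by rw [Lagrange.sum_basis injective_id.injOn hs, eval_one, mul_one]

section FiniteDimensional

variable {E : Type u} [NormedAddCommGroup E] [NormedSpace ℝ E] [FiniteDimensional ℝ E]

theorem det_one_add_pos_of_norm_lt_one {T : E →L[ℝ] E} (hT : ‖T‖ < 1) : 0 < (1 + T).det := by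
  have hne : ∀ t ∈ Icc (0 : ℝ) 1, (1 + t • T).det ≠ 0 := by
    intro t ht
    have hnorm : ‖-(t • T)‖ < 1 := by
      rw [norm_neg, norm_smul, Real.norm_of_nonneg ht.1]
      exact (mul_le_of_le_one_left (norm_nonneg T) ht.2).trans_lt hT
    have hunit : IsUnit (1 + t • T) := by
      simpa using isUnit_one_sub_of_norm_lt_one hnorm
    exact ((hunit.map ContinuousLinearMap.toLinearMapRingHom).map LinearMap.det).ne_zero
  have hcont : Continuous fun t : ℝ => (1 + t • T).det :=
    ContinuousLinearMap.continuous_det.comp (by fun_prop)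
  by_contra! hneg
  obtain ⟨t, ht, h0⟩ := intermediate_value_Icc' zero_le_one hcont.continuousOn
    (show (0 : ℝ) ∈ Icc (1 + (1 : ℝ) • T).det (1 + (0 : ℝ) • T).det by
      simpa [ContinuousLinearMap.det] using hneg)
  exact hne t ht h0

section Volume

variable [MeasurableSpace E] [BorelSpace E] {μ : Measure E} [μ.IsAddHaarMeasure]
  {U : Set E} {g : E → E} {K : ℝ≥0}

theorem integrableOn_det_and_integral_eq_of_lipschitzWith_lt_one (hU : IsOpen U) (hμU : μ U ≠ ⊤)
    (hg : LipschitzWith K g) (hK : K < 1) (hdiff : DifferentiableOn ℝ g U) (hg0 : EqOn g 0 Uᶜ) :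
    IntegrableOn (fun z => (1 + fderiv ℝ g z).det) U μ ∧
      ∫ z in U, (1 + fderiv ℝ g z).det ∂μ = μ.real U := by
  have hbij := bijective_id_add_of_lipschitzWith hg hK
  have himage : (fun z => z + g z) '' U = U := by
    have hcompl : (fun z => z + g z) '' Uᶜ = Uᶜ := by
      have hid : EqOn (fun z => z + g z) id Uᶜ := fun z hz => by simp [hg0 hz]
      rw [hid.image_eq, image_id]
    rw [image_compl_eq hbij] at hcompl
    exact compl_injective hcompl
  have hderiv : ∀ z ∈ U, HasFDerivWithinAt (fun z => z + g z) (1 + fderiv ℝ g z) U z :=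
    fun z hz => ((hasFDerivAt_id z).add
      (hdiff.differentiableAt (hU.mem_nhds hz)).hasFDerivAt).hasFDerivWithinAt
  have habs : ∀ z, |(1 + fderiv ℝ g z).det| = (1 + fderiv ℝ g z).det := fun z =>
    abs_of_pos (det_one_add_pos_of_norm_lt_one ((norm_fderiv_le_of_lipschitz ℝ hg).trans_lt hK))
  have hint := integrableOn_image_iff_integrableOn_abs_det_fderiv_smul μ hU.measurableSet
    hderiv hbij.injective.injOn fun _ => (1 : ℝ)
  have hvol := integral_image_eq_integral_abs_det_fderiv_smul μ hU.measurableSet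
    hderiv hbij.injective.injOn fun _ => (1 : ℝ)
  simp only [himage, habs, smul_eq_mul, mul_one] at hint hvol
  exact ⟨hint.1 (integrableOn_const hμU), by rw [← hvol]; simp⟩

theorem integral_det_one_add_fderiv_of_lipschitzWith (hU : IsOpen U) (hμU : μ U ≠ ⊤)
    (hg : LipschitzWith K g) (hdiff : DifferentiableOn ℝ g U) (hg0 : EqOn g 0 Uᶜ) :
    ∫ z in U, (1 + fderiv ℝ g z).det ∂μ = μ.real U := by
  choose p hdeg hp using fun z =>
    exists_polynomial_eval_eq_det_one_add_smul (fderiv ℝ g z : E →ₗ[ℝ] E)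
  have heval : ∀ (t : ℝ) (z : E), (p z).eval t = (1 + fderiv ℝ (t • g) z).det := fun t z => by
    rw [hp, fderiv_const_smul_field]; rfl
  have hsmall : ∀ t ∈ Ioo (0 : ℝ) (K + 1)⁻¹,
      IntegrableOn (fun z => (p z).eval t) U μ ∧ ∫ z in U, (p z).eval t ∂μ = μ.real U := by
    rintro t ⟨ht0, ht1⟩
    simp only [heval]
    refine integrableOn_det_and_integral_eq_of_lipschitzWith_lt_one hU hμU
      ((lipschitzWith_smul t).comp hg) ?_ (hdiff.const_smul t) fun z hz => by simp [hg0 hz]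
    have hK : (0 : ℝ) < K + 1 := by positivity
    rw [← NNReal.coe_lt_coe, NNReal.coe_mul, coe_nnnorm, Real.norm_of_nonneg ht0.le,
      NNReal.coe_one]
    calc t * K ≤ t * (K + 1) := by gcongr; linarith
      _ < 1 := (lt_inv_mul_iff₀' hK).1 (by simpa using ht1)
  have hone := integral_eval_eq_of_infinite hdeg (Ioo_infinite (by positivity))
    (fun t ht => (hsmall t ht).1) (fun t ht => (hsmall t ht).2) 1
  simpa only [heval, one_smul] using hone

end Volume

theorem det_fderiv_eq_zero_of_mapsTo {f : E → E} {z : E} {s t : Set E}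
    (hf : ContDiffAt ℝ 1 f z) (hs : s ∈ 𝓝 z) (hst : MapsTo f s t) (ht : interior t = ∅) :
    (fderiv ℝ f z).det = 0 := by
  by_contra hdet
  have hsurj : (fderiv ℝ f z).range = ⊤ :=
    (LinearMap.isUnit_iff_range_eq_top _).1
      ((LinearMap.isUnit_iff_isUnit_det _).2 (isUnit_iff_ne_zero.2 hdet))
  have hnhds : t ∈ 𝓝 (f z) := by
    rw [← (hf.hasStrictFDerivAt one_ne_zero).map_nhds_eq_of_surj hsurj]
    exact Filter.mem_map.2 (Filter.mem_of_superset hs hst)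
  have hmem : f z ∈ interior t := mem_interior_iff_mem_nhds.2 hnhds
  exact notMem_empty _ (ht ▸ hmem)

theorem not_mapsTo_frontier_of_contDiffOn {U : Set E} (hU : IsOpen U)
    (hconv : Convex ℝ U) (hbdd : Bornology.IsBounded U) (hne : U.Nonempty) {r : E → E}
    (hr : ContDiffOn ℝ 1 r (closure U)) (hfix : EqOn r id (frontier U)) :
    ¬ MapsTo r U (frontier U) := by
  intro hmaps
  borelize E
  let μ : Measure E := Measure.addHaar
  let g : E → E := U.indicator (r - id)
  obtain ⟨K, hK⟩ := (hr.sub contDiffOn_id).exists_lipschitzOnWith one_ne_zero hconv.closure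
    hbdd.isCompact_closure
  have hg : LipschitzWith K g :=
    lipschitzWith_indicator_of_eqOn_frontier hK fun z hz => by simp [hfix hz]
  have hrU : ∀ z ∈ U, ContDiffAt ℝ 1 r z := fun z hz =>
    hr.contDiffAt (Filter.mem_of_superset (hU.mem_nhds hz) subset_closure)
  have hgderiv : ∀ z ∈ U, HasFDerivAt g (fderiv ℝ r z - 1) z := fun z hz =>
    (((hrU z hz).differentiableAt one_ne_zero).hasFDerivAt.sub (hasFDerivAt_id z)
      ).congr_of_eventuallyEq (eqOn_indicator.eventuallyEq_of_mem (hU.mem_nhds hz))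
  have hdet : ∀ z ∈ U, (1 + fderiv ℝ g z).det = 0 := by
    intro z hz
    rw [(hgderiv z hz).fderiv, add_sub_cancel]
    exact det_fderiv_eq_zero_of_mapsTo (hrU z hz) (hU.mem_nhds hz) hmaps
      (by rw [← frontier_compl, interior_frontier hU.isClosed_compl])
  have hvol : μ.real U = 0 := by
    rw [← integral_det_one_add_fderiv_of_lipschitzWith hU hbdd.measure_lt_top.ne hg
      (fun z hz => (hgderiv z hz).differentiableAt.differentiableWithinAt)
      fun z hz => indicator_of_notMem hz _]
    exact setIntegral_eq_zero_of_forall_eq_zero hdet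
  exact (ENNReal.toReal_pos (hU.measure_pos μ hne).ne' hbdd.measure_lt_top.ne).ne' hvol

section InnerProductSpace

variable {F : Type*} [NormedAddCommGroup F] [InnerProductSpace ℝ F] [FiniteDimensional ℝ F]

theorem exists_eq_zero_of_contDiffOn_of_eqOn_sphere {R : ℝ} (hR : 0 < R) {q : F → F}
    (hq : ContDiffOn ℝ 1 q (closedBall 0 R)) (hqid : EqOn q id (sphere 0 R)) :
    ∃ z ∈ closedBall 0 R, q z = 0 := by
  by_contra! hq0
  have hfrontier : frontier (ball (0 : F) R) = sphere 0 R := frontier_ball 0 hR.ne'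
  have hclosure : closure (ball (0 : F) R) = closedBall 0 R := closure_ball 0 hR.ne'
  refine not_mapsTo_frontier_of_contDiffOn (r := fun z => R • ‖q z‖⁻¹ • q z)
    isOpen_ball (convex_ball 0 R) isBounded_ball (nonempty_ball.2 hR) ?_ ?_ ?_
  · rw [hclosure]
    exact (((hq.norm ℝ hq0).inv fun z hz => norm_ne_zero_iff.2 (hq0 z hz)).smul hq).const_smul R
  · intro z hz
    rw [hfrontier] at hz
    simp only [hqid hz, id_eq, mem_sphere_zero_iff_norm.1 hz, smul_inv_smul₀ hR.ne']
  · intro z hz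
    rw [hfrontier, mem_sphere_zero_iff_norm, norm_smul, norm_smul, norm_inv, norm_norm,
      inv_mul_cancel₀ (norm_ne_zero_iff.2 (hq0 z (ball_subset_closedBall hz))), mul_one,
      Real.norm_of_nonneg hR.le]

theorem exists_isFixedPt_of_contDiff_of_norm_le {f : F → F} (hf : ContDiff ℝ 1 f) {m : ℝ}
    (hm : ∀ z, ‖f z‖ ≤ m) : ∃ z, IsFixedPt f z := by
  have hm0 : 0 ≤ m := (norm_nonneg _).trans (hm 0)
  let χ : ContDiffBump (0 : F) := ⟨m + 1, m + 2, by positivity, by linarith⟩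
  obtain ⟨z, -, hz⟩ := exists_eq_zero_of_contDiffOn_of_eqOn_sphere (R := m + 2) (by positivity)
    (q := fun z => z - χ z • f z) (contDiff_id.sub (χ.contDiff.smul hf)).contDiffOn fun z hz => by
      have hχ : χ z = 0 := χ.zero_of_le_dist (mem_sphere.1 hz).ge
      simp [hχ]
  have hzχ : z = χ z • f z := sub_eq_zero.1 hz
  have hznorm : ‖z‖ ≤ m := by
    calc ‖z‖ = χ z * ‖f z‖ := by
          conv_lhs => rw [hzχ, norm_smul, Real.norm_of_nonneg χ.nonneg]
      _ ≤ 1 * m := by gcongr; exacts [χ.le_one, hm z]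
      _ = m := one_mul m
  have hχ : χ z = 1 := χ.one_of_mem_closedBall
    (mem_closedBall_zero_iff.2 (hznorm.trans (le_add_of_nonneg_right zero_le_one)))
  exact ⟨z, by rw [IsFixedPt, ← one_smul ℝ (f z), ← hχ, ← hzχ]⟩

end InnerProductSpace

theorem exists_isFixedPt_of_continuous_of_isBounded_range {f : E → E} (hf : Continuous f)
    (hbdd : Bornology.IsBounded (range f)) : ∃ z, IsFixedPt f z := by
  by_contra! hno
  let e : E ≃L[ℝ] EuclideanSpace ℝ (Fin (Module.finrank ℝ E)) := toEuclidean
  let F := e ∘ f ∘ e.symm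
  have hF : Continuous F := by fun_prop
  have hFno : ∀ w, F w ≠ w := fun w hw =>
    hno (e.symm w) (e.injective (hw.trans (e.apply_symm_apply w).symm))
  obtain ⟨m, hm⟩ : ∃ m, ∀ w, ‖F w‖ ≤ m := by
    obtain ⟨m, hm⟩ := isBounded_iff_forall_norm_le.1 (e.lipschitz.isBounded_image hbdd)
    exact ⟨m, fun w => hm _ (mem_image_of_mem e (mem_range_self _))⟩
  obtain ⟨v, hv, hvF, -⟩ := hF.exists_contDiff_approx 1
    (ε := fun w => min 1 (dist w (F w))) (by fun_prop)
    fun w => lt_min one_pos (dist_pos.2 (hFno w).symm)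
  obtain ⟨w, hw⟩ := exists_isFixedPt_of_contDiff_of_norm_le hv (m := m + 1) fun w => by
    have h1 := (hvF w).trans_le (min_le_left _ _)
    rw [dist_eq_norm] at h1
    linarith [norm_le_norm_add_norm_sub' (v w) (F w), hm w]
  have h2 := (hvF w).trans_le (min_le_right _ _)
  rw [hw] at h2
  exact lt_irrefl _ h2

theorem exists_mem_isFixedPt_of_tietzeExtension {s : Set E}
    (hs : IsCompact s) [TietzeExtension.{u} s] {f : E → E} (hf : ContinuousOn f s)
    (hfs : MapsTo f s s) : ∃ z ∈ s, IsFixedPt f z := by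
  obtain ⟨F, hFs, hFf⟩ := ContinuousMap.exists_forall_mem_restrict_eq hs.isClosed
    ⟨s.domRestrict f, hf.domRestrict⟩ (t := s) fun z => hfs z.2
  obtain ⟨z, hz⟩ := exists_isFixedPt_of_continuous_of_isBounded_range F.continuous
    (hs.isBounded.subset (range_subset_iff.2 hFs))
  have hzs : z ∈ s := hz ▸ hFs z
  have hFz : F z = f z := DFunLike.congr_fun hFf ⟨z, hzs⟩
  exact ⟨z, hzs, hFz.symm.trans hz⟩

theorem exists_mem_closedBall_eq_of_norm_sub_le {x : E} {r : ℝ} (hr : 0 < r) {y : E → E}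
    (hy : ContinuousOn y (closedBall x r)) (hyr : ∀ z ∈ closedBall x r, ‖y z - z‖ ≤ r) :
    ∃ z ∈ closedBall x r, y z = x := by
  have := Metric.instTietzeExtensionClosedBall.{u} ℝ x hr
  obtain ⟨z, hz, hfix⟩ := exists_mem_isFixedPt_of_tietzeExtension (isCompact_closedBall x r)
    (f := fun z => x + (z - y z)) (by fun_prop) fun z hz => by
      simpa [norm_sub_rev] using hyr z hz
  have h : x + (z - y z) = z := hfix
  exact ⟨z, hz, by grind⟩

theorem stmt17_general {s : Set E} {y : E → E}
    (hy : ContinuousOn y (closure s)) {x : E} (hx : x ∈ s)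
    (hclose : ∀ z ∈ closure s, ‖y z - z‖ < infDist x (frontier s)) : x ∈ y '' s := by
  have hr : 0 < infDist x (frontier s) :=
    (norm_nonneg _).trans_lt (hclose x (subset_closure hx))
  have hball := ball_infDist_frontier_subset hx
  have hclosedBall : closedBall x (infDist x (frontier s)) ⊆ closure s := by
    rw [← closure_ball x hr.ne']
    exact closure_mono hball
  obtain ⟨z, hz, hyz⟩ := exists_mem_closedBall_eq_of_norm_sub_le hr (hy.mono hclosedBall)
    fun z hz => (hclose z (hclosedBall hz)).le
  refine ⟨z, hball ?_, hyz⟩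
  simpa [mem_ball, dist_comm, dist_eq_norm, hyz] using hclose z (hclosedBall hz)

end FiniteDimensional

/-- Let `d ≥ 1`, let `Ω ⊂ ℝ^d` be a bounded open set, and let `y` be continuous on
`closure(Ω)`. Let `x ∈ Ω` be such that `|y(z) − z| < dist(x, ∂Ω)` for every `z ∈ closure(Ω)`.
Then `x ∈ y(Ω)`. -/
theorem stmt17 (d : ℕ) (hd : 1 ≤ d) (Ω : Set (EuclideanSpace ℝ (Fin d)))
    (hΩopen : IsOpen Ω) (hΩbdd : Bornology.IsBounded Ω)
    (y : EuclideanSpace ℝ (Fin d) → EuclideanSpace ℝ (Fin d))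
    (hy : ContinuousOn y (closure Ω))
    (x : EuclideanSpace ℝ (Fin d)) (hx : x ∈ Ω)
    (hclose : ∀ z ∈ closure Ω, ‖y z - z‖ < Metric.infDist x (frontier Ω)) :
    x ∈ y '' Ω :=
  stmt17_general hy hx hclose
end
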